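/- arXiv:2406.15800 — 3 statements merged into one kernel-verified Lean document; each statement's English description precedes it below -/
import Mathlib

section
/- Let N = (N,·) be a finite group that is the internal direct product of two subgroups M and M', i.e. N = M × M'. If M is bad (there exists a group operation ∘ on M such that (M,·,∘) is a skew brace and some subgroup of (M,∘) is not a left ideal of (M,·,∘)), then N is bad: there exists a group operation ∘' on N such that (N,·,∘') is a skew brace and some subgroup of (N,∘') is not a left ideal of (N,·,∘'). -/
section SkewBraceDefs

variable {G : Type*}

/-- `op` is a group operation on `G` (associative, with identity and inverses). -/
def IsGroupOp (op : G → G → G) : Prop :=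
  (∀ a b c : G, op (op a b) c = op a (op b c)) ∧
  ∃ e : G, (∀ a : G, op e a = a ∧ op a e = a) ∧ ∀ a : G, ∃ b : G, op a b = e ∧ op b a = e

/-- `(G, *, op)` is a skew brace: `op` is a group operation and the brace relation
`a ∘ (b * c) = (a ∘ b) * a⁻¹ * (a ∘ c)` holds. -/
def IsSkewBrace [Group G] (op : G → G → G) : Prop :=
  IsGroupOp op ∧ ∀ a b c : G, op a (b * c) = op a b * a⁻¹ * op a c

/-- `S` is a subgroup of `(G, op)` (the two operations of a skew brace share the
identity `1`). -/
def IsCircSubgroup [Group G] (op : G → G → G) (S : Set G) : Prop :=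
  (1 : G) ∈ S ∧ (∀ a ∈ S, ∀ b ∈ S, op a b ∈ S) ∧
  ∀ a ∈ S, ∃ b ∈ S, op a b = 1 ∧ op b a = 1

/-- A left ideal of the skew brace `(G, *, op)`: a subgroup `I` of `(G, *)` with
`γ_a(I) ⊆ I` for all `a`, where `γ_a b = a⁻¹ * (a ∘ b)`. -/
def IsLeftIdeal [Group G] (op : G → G → G) (I : Subgroup G) : Prop :=
  ∀ a : G, ∀ b ∈ I, a⁻¹ * op a b ∈ I

/-- Additive version of `IsSkewBrace`: `a ∘ (b + c) = (a ∘ b) - a + (a ∘ c)`. -/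
def IsSkewBraceAdd [AddGroup G] (op : G → G → G) : Prop :=
  IsGroupOp op ∧ ∀ a b c : G, op a (b + c) = op a b - a + op a c

/-- Additive version of `IsCircSubgroup`. -/
def IsCircSubgroupAdd [AddGroup G] (op : G → G → G) (S : Set G) : Prop :=
  (0 : G) ∈ S ∧ (∀ a ∈ S, ∀ b ∈ S, op a b ∈ S) ∧
  ∀ a ∈ S, ∃ b ∈ S, op a b = 0 ∧ op b a = 0

/-- Additive version of `IsLeftIdeal`: `γ_a b = -a + (a ∘ b)`. -/
def IsLeftIdealAdd [AddGroup G] (op : G → G → G) (I : AddSubgroup G) : Prop :=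
  ∀ a : G, ∀ b ∈ I, -a + op a b ∈ I

end SkewBraceDefs

/-!
Being bad lifts along surjections: if a skew brace `B` surjects onto a skew brace `C`, and `S` is a
subgroup of `(C, ∘)` that is not a left ideal, then the preimage of `S` is a subgroup of `(B, ∘)`,
and it is not a left ideal, since the image of a left ideal of `B` is a left ideal of `C`. Given
`∘` on `M`, let `∘` be the given multiplication on `M'`; the projection of `N = M × M'` onto `M`
is then such a surjection.
-/

/-- A group, finite or not, is bad if it carries a skew brace operation with a `∘`-subgroup that
is not a left ideal. -/
def IsBadGroup (G : Type*) [Group G] : Prop :=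
  ∃ op : G → G → G, IsSkewBrace op ∧
    ∃ S : Set G, IsCircSubgroup op S ∧ ¬ ∃ I : Subgroup G, (I : Set G) = S ∧ IsLeftIdeal op I

section GroupOp

variable {G H : Type*}

theorem IsGroupOp.prod {opG : G → G → G} {opH : H → H → H} (hG : IsGroupOp opG)
    (hH : IsGroupOp opH) : IsGroupOp fun a b : G × H ↦ (opG a.1 b.1, opH a.2 b.2) := by
  obtain ⟨assocG, eG, idG, invG⟩ := hG
  obtain ⟨assocH, eH, idH, invH⟩ := hH
  refine ⟨fun a b c ↦ Prod.ext (assocG _ _ _) (assocH _ _ _), (eG, eH), fun a ↦ ?_, fun a ↦ ?_⟩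
  · exact ⟨Prod.ext (idG _).1 (idH _).1, Prod.ext (idG _).2 (idH _).2⟩
  · obtain ⟨b, hab, hba⟩ := invG a.1
    obtain ⟨c, hac, hca⟩ := invH a.2
    exact ⟨(b, c), Prod.ext hab hac, Prod.ext hba hca⟩

theorem IsGroupOp.congr {op : G → G → G} (h : IsGroupOp op) (e : G ≃ H) :
    IsGroupOp fun a b ↦ e (op (e.symm a) (e.symm b)) := by
  obtain ⟨assoc, i, hid, hinv⟩ := h
  refine ⟨fun a b c ↦ by simp [assoc], e i, fun a ↦ by simp [hid], fun a ↦ ?_⟩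
  obtain ⟨b, hab, hba⟩ := hinv (e.symm a)
  exact ⟨e b, by simp [hab], by simp [hba]⟩

theorem isGroupOp_mul [Group G] : IsGroupOp fun a b : G ↦ a * b :=
  ⟨mul_assoc, 1, fun a ↦ ⟨one_mul a, mul_one a⟩,
    fun a ↦ ⟨a⁻¹, mul_inv_cancel a, inv_mul_cancel a⟩⟩

end GroupOp

section SkewBrace

variable {G H : Type*} [Group G] [Group H] {opG : G → G → G} {opH : H → H → H}

theorem isSkewBrace_mul : IsSkewBrace fun a b : G ↦ a * b :=
  ⟨isGroupOp_mul, fun a b c ↦ by group⟩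

namespace IsSkewBrace

theorem prod (hG : IsSkewBrace opG) (hH : IsSkewBrace opH) :
    IsSkewBrace fun a b : G × H ↦ (opG a.1 b.1, opH a.2 b.2) :=
  ⟨hG.1.prod hH.1, fun _ _ _ ↦ Prod.ext (hG.2 _ _ _) (hH.2 _ _ _)⟩

theorem congr (h : IsSkewBrace opG) (e : G ≃* H) :
    IsSkewBrace fun a b ↦ e (opG (e.symm a) (e.symm b)) :=
  ⟨h.1.congr e.toEquiv, fun a b c ↦ by simp [h.2]⟩

theorem op_one (h : IsSkewBrace opG) (a : G) : opG a 1 = a := by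
  have brace : opG a 1 = opG a 1 * a⁻¹ * opG a 1 := by simpa using h.2 a 1 1
  rwa [right_eq_mul, mul_inv_eq_one] at brace

theorem eq_one_of_forall_op_eq (h : IsSkewBrace opG) {e : G} (he : ∀ a, opG e a = a) : e = 1 :=
  (h.op_one e).symm.trans (he 1)

theorem one_op (h : IsSkewBrace opG) (a : G) : opG 1 a = a := by
  obtain ⟨e, hid, -⟩ := h.1.2
  obtain rfl := h.eq_one_of_forall_op_eq fun a ↦ (hid a).1
  exact (hid a).1

theorem exists_inv (h : IsSkewBrace opG) (a : G) : ∃ b, opG a b = 1 ∧ opG b a = 1 := by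
  obtain ⟨e, hid, hinv⟩ := h.1.2
  obtain rfl := h.eq_one_of_forall_op_eq fun a ↦ (hid a).1
  exact hinv a

theorem eq_of_op_eq_one (h : IsSkewBrace opG) {a b c : G} (hba : opG b a = 1)
    (hac : opG a c = 1) : b = c :=
  calc
    b = opG b (opG a c) := by rw [hac, h.op_one]
    _ = opG (opG b a) c := (h.1.1 b a c).symm
    _ = c := by rw [hba, h.one_op]

end IsSkewBrace

theorem IsCircSubgroup.preimage {S : Set H} (hS : IsCircSubgroup opH S) (hG : IsSkewBrace opG)
    (hH : IsSkewBrace opH) (f : G →* H) (hf : ∀ a b, f (opG a b) = opH (f a) (f b)) :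
    IsCircSubgroup opG (f ⁻¹' S) := by
  obtain ⟨one_mem, op_mem, exists_inv_mem⟩ := hS
  refine ⟨by simpa using one_mem, fun a ha b hb ↦ ?_, fun a ha ↦ ?_⟩
  · simpa [hf] using op_mem _ ha _ hb
  · obtain ⟨b, hab, hba⟩ := hG.exists_inv a
    obtain ⟨c, hc, hac, -⟩ := exists_inv_mem _ ha
    have hfb : f b = c := hH.eq_of_op_eq_one (by rw [← hf, hba, map_one]) hac
    exact ⟨b, by simpa [hfb] using hc, hab, hba⟩

theorem IsLeftIdeal.map {I : Subgroup G} (hI : IsLeftIdeal opG I) (f : G →* H)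
    (hf : ∀ a b, f (opG a b) = opH (f a) (f b)) (hsurj : Function.Surjective f) :
    IsLeftIdeal opH (I.map f) := by
  intro a b hb
  obtain ⟨x, rfl⟩ := hsurj a
  obtain ⟨y, hy, rfl⟩ := hb
  exact ⟨x⁻¹ * opG x y, hI x y hy, by simp [hf]⟩

end SkewBrace

namespace IsBadGroup

variable {G H : Type*} [Group G] [Group H]

theorem of_surjective_skewBraceHom {opG : G → G → G} {opH : H → H → H} (hG : IsSkewBrace opG)
    (hH : IsSkewBrace opH) (f : G →* H) (hf : ∀ a b, f (opG a b) = opH (f a) (f b))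
    (hsurj : Function.Surjective f) {S : Set H} (hS : IsCircSubgroup opH S)
    (hSI : ¬ ∃ I : Subgroup H, (I : Set H) = S ∧ IsLeftIdeal opH I) : IsBadGroup G := by
  refine ⟨opG, hG, f ⁻¹' S, hS.preimage hG hH f hf, ?_⟩
  rintro ⟨I, hIS, hI⟩
  refine hSI ⟨I.map f, ?_, hI.map f hf hsurj⟩
  rw [Subgroup.coe_map, hIS, Set.image_preimage_eq S hsurj]

theorem prod_left (hG : IsBadGroup G) : IsBadGroup (G × H) := by
  obtain ⟨op, hop, S, hS, hSI⟩ := hG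
  exact of_surjective_skewBraceHom (hop.prod isSkewBrace_mul) hop (MonoidHom.fst G H)
    (fun _ _ ↦ rfl) Prod.fst_surjective hS hSI

theorem of_mulEquiv (hG : IsBadGroup G) (e : G ≃* H) : IsBadGroup H := by
  obtain ⟨op, hop, S, hS, hSI⟩ := hG
  exact of_surjective_skewBraceHom (hop.congr e) hop e.symm.toMonoidHom
    (fun _ _ ↦ e.symm_apply_apply _) e.symm.surjective hS hSI

end IsBadGroup

/-- The internal direct product decomposition of a group along two complementary normal subgroups,
`(a, b) ↦ a * b`. -/
noncomputable def prodMulEquivOfIsCompl {G : Type*} [Group G] (H K : Subgroup G) [hH : H.Normal]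
    [hK : K.Normal] (h : IsCompl H K) : H × K ≃* G :=
  have comm (a : H) (b : K) : Commute (H.subtype a) (K.subtype b) :=
    Subgroup.commute_of_normal_of_disjoint H K hH hK h.disjoint a b a.2 b.2
  MulEquiv.ofBijective (H.subtype.noncommCoprod K.subtype comm)
    ⟨(MonoidHom.noncommCoprod_injective _ _ comm).2
        ⟨H.subtype_injective, K.subtype_injective, by simpa using h.disjoint⟩,
      MonoidHom.range_eq_top.1 <| by
        rw [MonoidHom.noncommCoprod_range, H.range_subtype, K.range_subtype, h.sup_eq_top]⟩

theorem bad_of_direct_factor_bad_general {N : Type*} [Group N] (M M' : Subgroup N) [M.Normal]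
    [M'.Normal] (h : IsCompl M M') (hbad : IsBadGroup M) : IsBadGroup N :=
  hbad.prod_left.of_mulEquiv (prodMulEquivOfIsCompl M M' h)

/-- **Lemma 2.9.** If `N = M × M'` is an internal direct product of subgroups and `M` is
bad (some skew brace operation on `M` has a `∘`-subgroup that is not a left ideal), then
`N` is bad as well. -/
theorem bad_of_direct_factor_bad (N : Type*) [Group N] [Finite N] (M M' : Subgroup N)
    (hM : M.Normal) (hM' : M'.Normal) (hinf : M ⊓ M' = ⊥) (hsup : M ⊔ M' = ⊤)
    (hbad : ∃ op : M → M → M, IsSkewBrace op ∧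
      ∃ S : Set M, IsCircSubgroup op S ∧
        ¬ ∃ I : Subgroup M, (I : Set M) = S ∧ IsLeftIdeal op I) :
    ∃ op' : N → N → N, IsSkewBrace op' ∧
      ∃ S : Set N, IsCircSubgroup op' S ∧
        ¬ ∃ I : Subgroup N, (I : Set N) = S ∧ IsLeftIdeal op' I :=
  bad_of_direct_factor_bad_general M M' (IsCompl.of_eq hinf hsup) hbad
end

section
/- The quaternion group Q₈ of order 8 is bad: there exists a group operation ∘ on Q₈ such that (Q₈,·,∘) is a skew brace and some subgroup of (Q₈,∘) is not a left ideal of (Q₈,·,∘). -/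
section SkewBrace

variable {G : Type*} [Group G]

namespace IsSkewBrace

variable {op : G → G → G}

theorem circ_one (h : IsSkewBrace op) (a : G) : op a 1 = a := by
  have hrel : op a 1 = op a 1 * (a⁻¹ * op a 1) := by
    simpa only [mul_one, mul_assoc] using h.2 a 1 1
  exact (inv_mul_eq_one.mp (left_eq_mul.mp hrel)).symm

theorem one_circ (h : IsSkewBrace op) (a : G) : op 1 a = a := by
  obtain ⟨e, he, -⟩ := h.1.2
  have e_eq_one : e = 1 := (h.circ_one e).symm.trans (he 1).1
  exact e_eq_one ▸ (he a).1

theorem isCircSubgroup_pair (h : IsSkewBrace op) {g : G} (hg : op g g = 1) :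
    IsCircSubgroup op {1, g} := by
  refine ⟨.inl rfl, ?_, ?_⟩
  · rintro a (rfl | rfl) b (rfl | rfl) <;> simp [h.circ_one, h.one_circ, hg]
  · rintro a (rfl | rfl)
    · exact ⟨1, .inl rfl, h.circ_one 1, h.circ_one 1⟩
    · exact ⟨a, .inr rfl, hg, hg⟩

end IsSkewBrace

theorem mul_self_eq_one_of_coe_subgroup_eq_pair {I : Subgroup G} {g : G}
    (hI : (I : Set G) = {1, g}) : g * g = 1 := by
  have mem_iff (x : G) : x ∈ I ↔ x = 1 ∨ x = g := Set.ext_iff.mp hI x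
  have hg : g ∈ I := (mem_iff g).mpr (.inr rfl)
  rcases (mem_iff _).mp (I.mul_mem hg hg) with h | h
  · exact h
  · simp [mul_eq_left.mp h]

theorem IsSkewBrace.isBadGroup {op : G → G → G} (h : IsSkewBrace op) {g : G}
    (hcirc : op g g = 1) (hmul : g * g ≠ 1) : IsBadGroup G :=
  ⟨op, h, {1, g}, h.isCircSubgroup_pair hcirc,
    fun ⟨_, hI, _⟩ => hmul (mul_self_eq_one_of_coe_subgroup_eq_pair hI)⟩

/-- The operation `a ∘ b = a * γ a b` of the skew brace with gamma function `γ`. -/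
def gammaCirc (γ : G → MulAut G) (a b : G) : G :=
  a * γ a b

/-- The functional equation `γ (a ∘ b) = γ a * γ b` characterizing the gamma functions of skew
braces among all maps `G → Aut G`. -/
def IsGammaFunction (γ : G → MulAut G) : Prop :=
  ∀ a b : G, γ (gammaCirc γ a b) = γ a * γ b

namespace IsGammaFunction

variable {γ : G → MulAut G}

theorem map_one (hγ : IsGammaFunction γ) : γ 1 = 1 := by
  simpa [gammaCirc] using hγ 1 1

theorem gammaCirc_assoc (hγ : IsGammaFunction γ) (a b c : G) :
    gammaCirc γ (gammaCirc γ a b) c = gammaCirc γ a (gammaCirc γ b c) := by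
  calc gammaCirc γ (gammaCirc γ a b) c
      = a * γ a b * (γ a * γ b) c := by rw [← hγ]; rfl
    _ = gammaCirc γ a (gammaCirc γ b c) := by simp [gammaCirc, mul_assoc]

theorem exists_gammaCirc_inverse (hγ : IsGammaFunction γ) (a : G) :
    ∃ b : G, gammaCirc γ a b = 1 ∧ gammaCirc γ b a = 1 := by
  set b := (γ a)⁻¹ a⁻¹ with hb
  have right_inv : gammaCirc γ a b = 1 := by simp [gammaCirc, hb]
  have gamma_b : γ b = (γ a)⁻¹ :=
    eq_inv_of_mul_eq_one_right (by rw [← hγ, right_inv, hγ.map_one])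
  have left_inv : gammaCirc γ b a = 1 := by
    rw [gammaCirc, gamma_b, hb, ← _root_.map_mul, inv_mul_cancel, _root_.map_one]
  exact ⟨b, right_inv, left_inv⟩

theorem isSkewBrace (hγ : IsGammaFunction γ) : IsSkewBrace (gammaCirc γ) := by
  refine ⟨⟨hγ.gammaCirc_assoc, 1, fun a => ⟨?_, ?_⟩, hγ.exists_gammaCirc_inverse⟩, fun a b c => ?_⟩
  · simp [gammaCirc, hγ.map_one]
  · simp [gammaCirc]
  · simp [gammaCirc, mul_assoc]

end IsGammaFunction

end SkewBrace

section Quaternion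

open QuaternionGroup

theorem natCast_add_natCast_zmod_two_mul (n : ℕ) : (n + n : ZMod (2 * n)) = 0 := by
  rw [← two_mul]
  exact_mod_cast ZMod.natCast_self (2 * n)

/-- The involutive automorphism of the generalized quaternion group inverting both generators
`a 1` and `xa 0`; the latter because `(xa i)⁻¹ = xa (n + i)`. -/
def quaternionFlip (n : ℕ) : MulAut (QuaternionGroup n) where
  toFun
    | a i => a (-i)
    | xa i => xa (n - i)
  invFun
    | a i => a (-i)
    | xa i => xa (n - i)
  left_inv := by rintro (i | i) <;> simp
  right_inv := by rintro (i | i) <;> simp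
  map_mul' := by
    rintro (i | i) (j | j)
    · exact congrArg a (by ring : -(i + j) = -i + -j)
    · exact congrArg xa (by ring : n - (j - i) = n - j - -i)
    · exact congrArg xa (by ring : n - (i + j) = n - i + -j)
    · refine congrArg a (?_ : -(n + j - i) = n + (n - j) - (n - i))
      linear_combination -natCast_add_natCast_zmod_two_mul n

@[simp]
theorem quaternionFlip_a {n : ℕ} (i : ZMod (2 * n)) : quaternionFlip n (a i) = a (-i) :=
  rfl

@[simp]
theorem quaternionFlip_xa {n : ℕ} (i : ZMod (2 * n)) :
    quaternionFlip n (xa i) = xa ((n : ZMod (2 * n)) - i) :=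
  rfl

theorem quaternionFlip_xa_zero (n : ℕ) : quaternionFlip n (xa 0) = (xa 0)⁻¹ := by
  simp [eq_inv_iff_mul_eq_one]

theorem quaternionFlip_mul_self (n : ℕ) : quaternionFlip n * quaternionFlip n = 1 := by
  ext (i | i) <;> simp

/-- The gamma function on the generalized quaternion group that is trivial on the cyclic subgroup
generated by `a 1` and equal to `quaternionFlip` on its other coset. -/
def quaternionGamma (n : ℕ) : QuaternionGroup n → MulAut (QuaternionGroup n)
  | a _ => 1
  | xa _ => quaternionFlip n

theorem isGammaFunction_quaternionGamma (n : ℕ) : IsGammaFunction (quaternionGamma n) := by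
  rintro (i | i) (j | j) <;> simp [gammaCirc, quaternionGamma, quaternionFlip_mul_self]

theorem gammaCirc_quaternionGamma_xa_zero (n : ℕ) :
    gammaCirc (quaternionGamma n) (xa 0) (xa 0) = 1 := by
  calc xa 0 * quaternionFlip n (xa 0)
      = xa 0 * (xa 0)⁻¹ := by rw [quaternionFlip_xa_zero]
    _ = 1 := mul_inv_cancel _

theorem xa_mul_self_ne_one (n : ℕ) [NeZero n] (i : ZMod (2 * n)) :
    (xa i : QuaternionGroup n) * xa i ≠ 1 := by
  rw [← sq]
  exact pow_ne_one_of_lt_orderOf two_ne_zero (by rw [orderOf_xa]; norm_num)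

theorem quaternionGroup_bad_general (n : ℕ) [NeZero n] : IsBadGroup (QuaternionGroup n) :=
  (isGammaFunction_quaternionGamma n).isSkewBrace.isBadGroup
    (gammaCirc_quaternionGamma_xa_zero n) (xa_mul_self_ne_one n 0)

end Quaternion

/-- **Example 3.1.** The quaternion group `Q₈` is bad: some skew brace operation `∘` on
`Q₈` admits a `∘`-subgroup that is not a left ideal. -/
theorem quaternionGroup_bad :
    ∃ op : QuaternionGroup 2 → QuaternionGroup 2 → QuaternionGroup 2,
      IsSkewBrace op ∧
      ∃ S : Set (QuaternionGroup 2), IsCircSubgroup op S ∧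
        ¬ ∃ I : Subgroup (QuaternionGroup 2), (I : Set (QuaternionGroup 2)) = S ∧
          IsLeftIdeal op I :=
  quaternionGroup_bad_general 2
end

section
/- Let p be a prime and let 1 ≤ m ≤ n be integers. On the group ℤ/pⁿℤ × ℤ/pᵐℤ with componentwise addition +, define (i,j) ∘ (r,s) = (i+r, j+s+ir) (where the product ir is reduced modulo pᵐ, which is well-defined since m ≤ n). Then ∘ is a group operation, the pair (ℤ/pⁿℤ × ℤ/pᵐℤ, +, ∘) is a skew brace (in fact a brace), and if p is odd, the map (i,j) ↦ (i, j + i(i−1)/2) is a group isomorphism from (ℤ/pⁿℤ × ℤ/pᵐℤ, +) to (ℤ/pⁿℤ × ℤ/pᵐℤ, ∘). -/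
/-!
For a biadditive map `β : A →+ A →+ B`, adding `β` to the second component of the sum on `A × B`
gives a skew brace: associativity of the new operation is the cocycle identity for `β`, and the
brace relation is additivity of `β` in its second argument. If moreover `β` is the coboundary of
some `q : A → B`, i.e. `q (a + b) = q a + q b + β a b`, then `(a, b) ↦ (a, b + q a)` turns the
addition into the twisted one. When `2` is invertible, the product `i * r` is the coboundary of
`i * (i - 1) / 2`.
-/

/-- The shear `(a, b) ↦ (a, b + q a)` of `A × B` along an arbitrary function `q`. -/
def addShear {A B : Type*} [AddGroup B] (q : A → B) : A × B ≃ A × B :=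
  Equiv.prodShear (Equiv.refl A) fun a => Equiv.addRight (q a)

section TwistedAdd

variable {A B : Type*} [AddGroup A] [AddCommGroup B]

/-- The addition of `A × B` twisted by a biadditive map `β`, that is, the operation
`(i, j) ∘ (r, s) = (i + r, j + s + β i r)`. -/
def twistedAdd (β : A →+ A →+ B) (x y : A × B) : A × B :=
  (x.1 + y.1, x.2 + y.2 + β x.1 y.1)

theorem twistedAdd_assoc (β : A →+ A →+ B) (x y z : A × B) :
    twistedAdd β (twistedAdd β x y) z = twistedAdd β x (twistedAdd β y z) := by
  ext
  · exact add_assoc _ _ _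
  · simp only [twistedAdd, map_add, AddMonoidHom.add_apply]
    abel

theorem isGroupOp_twistedAdd (β : A →+ A →+ B) : IsGroupOp (twistedAdd β) := by
  refine ⟨twistedAdd_assoc β, 0, fun x => by simp [twistedAdd], fun x => ?_⟩
  exact ⟨(-x.1, -x.2 + β x.1 x.1), by simp [twistedAdd], by simp [twistedAdd]⟩

theorem twistedAdd_add (β : A →+ A →+ B) (x y z : A × B) :
    twistedAdd β x (y + z) = twistedAdd β x y - x + twistedAdd β x z := by
  ext
  · simp [twistedAdd, sub_eq_add_neg, add_assoc]
  · simp only [twistedAdd, Prod.snd_add, Prod.snd_sub, Prod.fst_add, map_add]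
    abel

theorem isSkewBraceAdd_twistedAdd (β : A →+ A →+ B) : IsSkewBraceAdd (twistedAdd β) :=
  ⟨isGroupOp_twistedAdd β, twistedAdd_add β⟩

theorem addShear_add {β : A →+ A →+ B} {q : A → B}
    (hq : ∀ a b, q (a + b) = q a + q b + β a b) (x y : A × B) :
    addShear q (x + y) = twistedAdd β (addShear q x) (addShear q y) := by
  ext
  · rfl
  · change x.2 + y.2 + q (x.1 + y.1) = x.2 + q x.1 + (y.2 + q y.1) + β x.1 y.1
    rw [hq]
    abel

end TwistedAdd

theorem apply_add_of_two_mul_eq_mul_sub_one {R S : Type*} [Ring R] [CommRing S] (φ : R →+* S)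
    (h2 : IsLeftRegular (2 : S)) {q : R → S} (hq : ∀ i, 2 * q i = φ i * (φ i - 1)) (i r : R) :
    q (i + r) = q i + q r + φ (i * r) := by
  refine h2 (?_ : (2 : S) * _ = 2 * _)
  have hadd := hq (i + r)
  rw [map_add] at hadd
  rw [map_mul]
  linear_combination hadd - hq i - hq r

theorem two_mul_cast_mul_pred_div_two {R : Type*} [NonAssocRing R] (k : ℕ) :
    2 * ((k * (k - 1) / 2 : ℕ) : R) = k * (k - 1) := by
  have hdiv : 2 * (k * (k - 1) / 2) = k * (k - 1) :=
    Nat.mul_div_cancel' (Nat.even_mul_pred_self k).two_dvd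
  calc 2 * ((k * (k - 1) / 2 : ℕ) : R) = ((k * (k - 1) : ℕ) : R) := by
        exact_mod_cast congrArg (Nat.cast : ℕ → R) hdiv
    _ = k * (k - 1) := by cases k <;> simp

theorem isUnit_two_zmod_of_odd {d : ℕ} (hd : Odd d) : IsUnit (2 : ZMod d) := by
  exact_mod_cast (ZMod.isUnit_iff_coprime 2 d).mpr (Nat.coprime_two_left.mpr hd)

theorem val_mul_pred_div_two_add {N d : ℕ} [NeZero N] (h : d ∣ N) (hd : Odd d) (i r : ZMod N) :
    (((i + r).val * ((i + r).val - 1) / 2 : ℕ) : ZMod d) =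
      ((i.val * (i.val - 1) / 2 : ℕ) : ZMod d) + ((r.val * (r.val - 1) / 2 : ℕ) : ZMod d) +
        ZMod.castHom h (ZMod d) (i * r) :=
  apply_add_of_two_mul_eq_mul_sub_one (ZMod.castHom h (ZMod d))
    (isUnit_two_zmod_of_odd hd).isRegular.left
    (q := fun i => ((i.val * (i.val - 1) / 2 : ℕ) : ZMod d))
    (fun i => by rw [ZMod.castHom_apply, ← ZMod.natCast_val, two_mul_cast_mul_pred_div_two]) i r

theorem cyclic_pp_brace_general {N d : ℕ} [NeZero N] (h : d ∣ N)
    (op : ZMod N × ZMod d → ZMod N × ZMod d → ZMod N × ZMod d)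
    (hop : ∀ x y, op x y = (x.1 + y.1, x.2 + y.2 + ZMod.castHom h (ZMod d) (x.1 * y.1))) :
    IsSkewBraceAdd op ∧
    (Odd d → ∃ g : ZMod N × ZMod d → ZMod N × ZMod d,
      (∀ x, g x = (x.1, x.2 + ((x.1.val * (x.1.val - 1) / 2 : ℕ) : ZMod d))) ∧
      Function.Bijective g ∧ ∀ x y, g (x + y) = op (g x) (g y)) := by
  let β : ZMod N →+ ZMod N →+ ZMod d :=
    AddMonoidHom.mul.compr₂ (ZMod.castHom h (ZMod d)).toAddMonoidHom
  obtain rfl : op = twistedAdd β := funext₂ hop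
  refine ⟨isSkewBraceAdd_twistedAdd β, fun hd => ?_⟩
  let q (i : ZMod N) : ZMod d := (i.val * (i.val - 1) / 2 : ℕ)
  exact ⟨addShear q, fun _ => rfl, (addShear q).bijective,
    addShear_add (val_mul_pred_div_two_add h hd)⟩

/-- **Example 3.5.** Let `p` be a prime and `1 ≤ m ≤ n`. On `ℤ/pⁿℤ × ℤ/pᵐℤ` the
operation `(i,j) ∘ (r,s) = (i+r, j+s+ir)` (with `ir` reduced mod `pᵐ`) is a group
operation making `(ℤ/pⁿℤ × ℤ/pᵐℤ, +, ∘)` a skew brace (in fact a brace); if `p` is odd,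
`(i,j) ↦ (i, j + i(i-1)/2)` is an isomorphism from the additive group to the
`∘`-group. -/
theorem cyclic_pp_brace (p : ℕ) (hp : p.Prime) (m n : ℕ) (hm : 1 ≤ m) (hmn : m ≤ n) :
    ∀ op : ZMod (p ^ n) × ZMod (p ^ m) → ZMod (p ^ n) × ZMod (p ^ m) →
        ZMod (p ^ n) × ZMod (p ^ m),
      (∀ x y, op x y = (x.1 + y.1,
        x.2 + y.2 + ZMod.castHom (pow_dvd_pow p hmn) (ZMod (p ^ m)) (x.1 * y.1))) →
      IsSkewBraceAdd op ∧
      (Odd p → ∃ g : ZMod (p ^ n) × ZMod (p ^ m) → ZMod (p ^ n) × ZMod (p ^ m),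
        (∀ x, g x = (x.1, x.2 + ((x.1.val * (x.1.val - 1) / 2 : ℕ) : ZMod (p ^ m)))) ∧
        Function.Bijective g ∧ ∀ x y, g (x + y) = op (g x) (g y)) := by
  have : NeZero p := ⟨hp.ne_zero⟩
  exact fun op hop => (cyclic_pp_brace_general _ op hop).imp_right fun hiso hodd => hiso hodd.pow
end
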